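/- Consider any run of the multi-level Jefferson's method (with arbitrary tie-breaking) on a multi-level apportionment instance. For every h ≥ 0, after h seats have been allocated, for any two nodes p and c such that c is a child of p, it holds that (V^h_c + 1)/R_c ≥ (V^h_p + 1)/R_p. -/

import Mathlib

/-- A multi-level apportionment instance: a rooted tree on nodes `0, …, n`
(root `0`, encoded by a parent function with `parent i < i` for `i ≠ 0`),
together with entitlements `W`. -/
structure MLA where
  n : ℕ
  parent : Fin (n + 1) → Fin (n + 1)
  parent_lt : ∀ i : Fin (n + 1), i ≠ 0 → (parent i : ℕ) < (i : ℕ)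
  W : Fin (n + 1) → ℝ
  W_pos : ∀ i, 0 < W i
  W_le_one : ∀ i, W i ≤ 1
  W_root : W 0 = 1
  W_sum : ∀ i : Fin (n + 1),
    (Finset.univ.filter (fun c => c ≠ 0 ∧ parent c = i)).Nonempty →
    ∑ c ∈ Finset.univ.filter (fun c => c ≠ 0 ∧ parent c = i), W c = 1

namespace MLA

variable (T : MLA)

/-- The set of children of node `i`. -/
def children (i : Fin (T.n + 1)) : Finset (Fin (T.n + 1)) :=
  Finset.univ.filter (fun c => c ≠ 0 ∧ T.parent c = i)

/-- The ancestor set `A(i)`: `A(0) = {0}` and `A(i) = {parent i} ∪ A(parent i)`. -/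
def ancestors (i : Fin (T.n + 1)) : Finset (Fin (T.n + 1)) :=
  if h : i = 0 then {0} else insert (T.parent i) (ancestors (T.parent i))
termination_by (i : ℕ)
decreasing_by exact T.parent_lt i h

/-- The entitlement of node `i` relative to the root: `R i = ∏_{a ∈ A(i) ∪ {i}} W a`. -/
def R (i : Fin (T.n + 1)) : ℝ := ∏ a ∈ insert i (T.ancestors i), T.W a

/-- `V` is an allocation of `h` seats. -/
def IsAlloc (h : ℕ) (V : Fin (T.n + 1) → ℕ) : Prop :=
  V 0 = h ∧ ∀ i, (T.children i).Nonempty → V i = ∑ c ∈ T.children i, V c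

/-- `V` fulfills lower quota: `V i ≥ LQ i = max_{a ∈ A(i)} ⌊(R i / R a) · V a⌋`. -/
def FulfillsLowerQuota (V : Fin (T.n + 1) → ℕ) : Prop :=
  ∀ i, ∀ a ∈ T.ancestors i, ⌊T.R i / T.R a * (V a : ℝ)⌋ ≤ (V i : ℤ)

/-- `V` fulfills upper quota: `V i ≤ UQ i = min_{a ∈ A(i)} ⌈(R i / R a) · V a⌉`. -/
def FulfillsUpperQuota (V : Fin (T.n + 1) → ℕ) : Prop :=
  ∀ i, ∀ a ∈ T.ancestors i, (V i : ℤ) ≤ ⌈T.R i / T.R a * (V a : ℝ)⌉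


/-- `P` is the set of nodes receiving the new seat in one step of an iterative
method with selection criterion `crit` (to be minimized among children) and
eligibility constraint `elig`: `P` is a root-to-leaf path, each non-root node on
the path is an eligible child of its parent minimizing `crit` among all eligible
children, and the seat counts along `P` each increase by one. -/
def IsStepWith (crit : (Fin (T.n + 1) → ℕ) → Fin (T.n + 1) → ℝ)
    (elig : (Fin (T.n + 1) → ℕ) → Fin (T.n + 1) → Prop)
    (P : Finset (Fin (T.n + 1))) (Vh Vh1 : Fin (T.n + 1) → ℕ) : Prop :=
  (0 : Fin (T.n + 1)) ∈ P ∧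
  (∀ i ∈ P, i ≠ 0 → T.parent i ∈ P) ∧
  (∀ i ∈ P, (T.children i).Nonempty → ∃ c ∈ T.children i, c ∈ P) ∧
  (∀ c ∈ P, ∀ d ∈ P, c ≠ 0 → d ≠ 0 → T.parent c = T.parent d → c = d) ∧
  (∀ c ∈ P, c ≠ 0 → elig Vh c ∧
    ∀ d ∈ T.children (T.parent c), elig Vh d → crit Vh c ≤ crit Vh d) ∧
  (∀ i, Vh1 i = Vh i + if i ∈ P then 1 else 0)

/-- `V : ℕ → (nodes → ℕ)` is a run of the iterative method given by `crit` and
`elig` (with arbitrary tie-breaking): `V 0` is the all-zero allocation and each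
`V (h+1)` is obtained from `V h` by allocating one more seat along a path. -/
def IsRun (crit : (Fin (T.n + 1) → ℕ) → Fin (T.n + 1) → ℝ)
    (elig : (Fin (T.n + 1) → ℕ) → Fin (T.n + 1) → Prop)
    (V : ℕ → Fin (T.n + 1) → ℕ) : Prop :=
  (∀ i, V 0 i = 0) ∧ ∀ h, ∃ P, T.IsStepWith crit elig P (V h) (V (h + 1))

/-- Adams' criterion: a child `c` minimizing `V c / R c` receives the seat. -/
noncomputable def adamsCrit (V : Fin (T.n + 1) → ℕ) (c : Fin (T.n + 1)) : ℝ :=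
  (V c : ℝ) / T.R c

/-- Jefferson's criterion: a child `c` minimizing `(V c + 1) / R c` receives the seat. -/
noncomputable def jeffersonCrit (V : Fin (T.n + 1) → ℕ) (c : Fin (T.n + 1)) : ℝ :=
  ((V c : ℝ) + 1) / T.R c

/-- Trivial eligibility constraint: every child is eligible. -/
def trivElig (_ : Fin (T.n + 1) → ℕ) (_ : Fin (T.n + 1)) : Prop := True

/-- Eligibility constraint of the quota method: `V c / W c < V (parent c) + 1`. -/
def quotaElig (V : Fin (T.n + 1) → ℕ) (c : Fin (T.n + 1)) : Prop :=
  (V c : ℝ) / T.W c < (V (T.parent c) : ℝ) + 1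

/-- Eligibility constraint of the upper-compliant quota method:
`V c / R c < (V a + 1) / R a` for every ancestor `a` of `c`. -/
def ucElig (V : Fin (T.n + 1) → ℕ) (c : Fin (T.n + 1)) : Prop :=
  ∀ a ∈ T.ancestors c, (V c : ℝ) / T.R c < ((V a : ℝ) + 1) / T.R a

end MLA

/-!
Siblings served by Jefferson's rule stay balanced: `V d / R d ≤ (V c + 1) / R c` for all children
`c`, `d` of the same node, because a child is given a seat only when its `(V + 1) / R` is minimal.
Multiplying by `R d` and summing over all `d ≠ c`, together with the equality
`V c + 1 = (V c + 1) / R c * R c` for `c` itself, gives `V p + 1 ≤ (V c + 1) / R c * R p`, as the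
seats and the entitlements of the children of `p` add up to those of `p`.
-/

theorem sum_add_div_sum_le {ι K : Type*} [Field K] [LinearOrder K] [IsStrictOrderedRing K]
    {s : Finset ι} {v w : ι → K} {t r : K} {c : ι} (hc : c ∈ s) (hw : ∀ i ∈ s, 0 < w i)
    (hv : ∀ i ∈ s, i ≠ c → v i / w i ≤ r) (hct : (v c + t) / w c ≤ r) :
    (∑ i ∈ s, v i + t) / ∑ i ∈ s, w i ≤ r := by
  classical
  have hrest : ∑ i ∈ s.erase c, v i ≤ ∑ i ∈ s.erase c, r * w i := by
    refine Finset.sum_le_sum fun i hi ↦ ?_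
    obtain ⟨hic, his⟩ := Finset.mem_erase.mp hi
    exact (div_le_iff₀ (hw i his)).mp (hv i his hic)
  rw [div_le_iff₀ (Finset.sum_pos hw ⟨c, hc⟩), Finset.mul_sum]
  calc ∑ i ∈ s, v i + t = ∑ i ∈ s.erase c, v i + (v c + t) := by
        rw [← Finset.sum_erase_add s v hc, add_assoc]
    _ ≤ ∑ i ∈ s.erase c, r * w i + r * w c :=
        add_le_add hrest ((div_le_iff₀ (hw c hc)).mp hct)
    _ = ∑ i ∈ s, r * w i := Finset.sum_erase_add s _ hc

namespace MLA

variable {T : MLA}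

section Entitlements

variable {i j p c : Fin (T.n + 1)}

theorem mem_children : c ∈ T.children p ↔ c ≠ 0 ∧ T.parent c = p := by
  simp [children]

theorem ancestors_of_ne_zero (hi : i ≠ 0) :
    T.ancestors i = insert (T.parent i) (T.ancestors (T.parent i)) := by
  rw [ancestors, dif_neg hi]

theorem le_of_mem_ancestors (hj : j ∈ T.ancestors i) : j ≤ i := by
  induction i using WellFoundedLT.induction with
  | ind i ih =>
    obtain rfl | hi := eq_or_ne i 0
    · rw [ancestors, dif_pos rfl, Finset.mem_singleton] at hj
      exact hj.le
    · rw [ancestors_of_ne_zero hi, Finset.mem_insert] at hj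
      have hparent : T.parent i < i := T.parent_lt i hi
      obtain rfl | hj := hj
      · exact hparent.le
      · exact (ih _ hparent hj).trans hparent.le

theorem notMem_ancestors_self (hi : i ≠ 0) : i ∉ T.ancestors i := by
  have hparent : T.parent i < i := T.parent_lt i hi
  rw [ancestors_of_ne_zero hi, Finset.mem_insert, not_or]
  exact ⟨hparent.ne', fun h ↦ (le_of_mem_ancestors h).not_gt hparent⟩

theorem R_pos (i : Fin (T.n + 1)) : 0 < T.R i :=
  Finset.prod_pos fun a _ ↦ T.W_pos a

theorem R_eq_W_mul_R_parent (hi : i ≠ 0) : T.R i = T.W i * T.R (T.parent i) := by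
  rw [R, Finset.prod_insert (notMem_ancestors_self hi), ancestors_of_ne_zero hi, R]

theorem sum_R_children (hp : (T.children p).Nonempty) :
    ∑ c ∈ T.children p, T.R c = T.R p := by
  have hR : ∀ c ∈ T.children p, T.R c = T.W c * T.R p := by
    intro c hc
    obtain ⟨hc₀, rfl⟩ := mem_children.mp hc
    exact R_eq_W_mul_R_parent hc₀
  have hW : ∑ c ∈ T.children p, T.W c = 1 := T.W_sum p hp
  rw [Finset.sum_congr rfl hR, ← Finset.sum_mul, hW, one_mul]

end Entitlements

section Allocations

variable {crit : (Fin (T.n + 1) → ℕ) → Fin (T.n + 1) → ℝ}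
  {elig : (Fin (T.n + 1) → ℕ) → Fin (T.n + 1) → Prop} {P : Finset (Fin (T.n + 1))}
  {U U' : Fin (T.n + 1) → ℕ} {V : ℕ → Fin (T.n + 1) → ℕ} {h : ℕ}

theorem IsStepWith.le (hstep : T.IsStepWith crit elig P U U') : U ≤ U' := by
  obtain ⟨-, -, -, -, -, hU'⟩ := hstep
  exact fun i ↦ (Nat.le_add_right _ _).trans_eq (hU' i).symm

theorem IsStepWith.sum_children_ite_mem (hstep : T.IsStepWith crit elig P U U')
    {p : Fin (T.n + 1)} (hp : (T.children p).Nonempty) :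
    ∑ c ∈ T.children p, (if c ∈ P then 1 else 0) = if p ∈ P then 1 else 0 := by
  obtain ⟨-, parent_mem, exists_child_mem, child_unique, -, -⟩ := hstep
  by_cases hpP : p ∈ P
  · obtain ⟨c, hc, hcP⟩ := exists_child_mem p hpP hp
    rw [if_pos hpP, Finset.sum_eq_single_of_mem c hc, if_pos hcP]
    intro d hd hdc
    obtain ⟨hc₀, hcp⟩ := mem_children.mp hc
    obtain ⟨hd₀, hdp⟩ := mem_children.mp hd
    exact if_neg fun hdP ↦ hdc (child_unique d hdP c hcP hd₀ hc₀ (hdp.trans hcp.symm))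
  · rw [if_neg hpP]
    refine Finset.sum_eq_zero fun c hc ↦ if_neg fun hcP ↦ hpP ?_
    obtain ⟨hc₀, rfl⟩ := mem_children.mp hc
    exact parent_mem c hcP hc₀

theorem IsStepWith.isAlloc (hstep : T.IsStepWith crit elig P U U') (hU : T.IsAlloc h U) :
    T.IsAlloc (h + 1) U' := by
  have hchildren := fun p ↦ hstep.sum_children_ite_mem (p := p)
  obtain ⟨root_mem, -, -, -, -, hU'⟩ := hstep
  refine ⟨by rw [hU', hU.1, if_pos root_mem], fun p hp ↦ ?_⟩
  simp only [hU', Finset.sum_add_distrib, hchildren p hp, ← hU.2 p hp]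

theorem IsRun.isAlloc (hrun : T.IsRun crit elig V) (h : ℕ) : T.IsAlloc h (V h) := by
  induction h with
  | zero => exact ⟨hrun.1 0, fun p _ ↦ by simp only [hrun.1, Finset.sum_const_zero]⟩
  | succ h ih =>
    obtain ⟨P, hstep⟩ := hrun.2 h
    exact hstep.isAlloc ih

theorem jeffersonCrit_mono (c : Fin (T.n + 1)) : Monotone fun U ↦ T.jeffersonCrit U c := by
  intro U U' hUU'
  have hRc : 0 < T.R c := R_pos c
  have hUc : U c ≤ U' c := hUU' c
  simp only [jeffersonCrit]
  gcongr

variable (T) in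
/-- Balinski and Young's min-max inequality characterising Jefferson apportionments, imposed on
every set of siblings of the tree. The case `c = d` is included, where it holds trivially. -/
def IsJeffersonBalanced (U : Fin (T.n + 1) → ℕ) : Prop :=
  ∀ p, ∀ c ∈ T.children p, ∀ d ∈ T.children p, (U d : ℝ) / T.R d ≤ T.jeffersonCrit U c

theorem isJeffersonBalanced_zero : T.IsJeffersonBalanced 0 := by
  intro p c _ d _
  have hRc : 0 < T.R c := R_pos c
  simp only [jeffersonCrit, Pi.zero_apply, Nat.cast_zero, zero_div]
  positivity

theorem IsStepWith.isJeffersonBalanced (hstep : T.IsStepWith T.jeffersonCrit T.trivElig P U U')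
    (hU : T.IsJeffersonBalanced U) : T.IsJeffersonBalanced U' := by
  intro p c hc d hd
  refine le_trans ?_ (jeffersonCrit_mono c hstep.le)
  obtain ⟨-, -, -, -, minimal, hU'⟩ := hstep
  by_cases hdP : d ∈ P
  · obtain ⟨hd₀, rfl⟩ := mem_children.mp hd
    have hdc : T.jeffersonCrit U d ≤ T.jeffersonCrit U c := (minimal d hdP hd₀).2 c hc trivial
    rw [hU', if_pos hdP, Nat.cast_add_one]
    exact hdc
  · rw [hU', if_neg hdP]
    exact hU p c hc d hd

theorem IsRun.isJeffersonBalanced (hrun : T.IsRun T.jeffersonCrit T.trivElig V) (h : ℕ) :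
    T.IsJeffersonBalanced (V h) := by
  induction h with
  | zero =>
    rw [show V 0 = 0 from funext hrun.1]
    exact isJeffersonBalanced_zero
  | succ h ih =>
    obtain ⟨P, hstep⟩ := hrun.2 h
    exact hstep.isJeffersonBalanced ih

theorem IsJeffersonBalanced.jeffersonCrit_parent_le (hU : T.IsJeffersonBalanced U)
    (halloc : T.IsAlloc h U) {p c : Fin (T.n + 1)} (hc : c ∈ T.children p) :
    T.jeffersonCrit U p ≤ T.jeffersonCrit U c := by
  have hp : (T.children p).Nonempty := ⟨c, hc⟩
  calc T.jeffersonCrit U p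
      = (∑ d ∈ T.children p, (U d : ℝ) + 1) / ∑ d ∈ T.children p, T.R d := by
        rw [jeffersonCrit, halloc.2 p hp, sum_R_children hp, Nat.cast_sum]
    _ ≤ T.jeffersonCrit U c :=
        sum_add_div_sum_le hc (fun d _ ↦ R_pos d) (fun d hd _ ↦ hU p c hc d hd) le_rfl

end Allocations

end MLA

/-- In any run of the multi-level Jefferson's method, after `h`
seats have been allocated, for any child `c` of a node `p` we have
`(V^h_c + 1)/R_c ≥ (V^h_p + 1)/R_p`. -/
theorem jefferson_child_parent_ratio (T : MLA) (V : ℕ → Fin (T.n + 1) → ℕ)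
    (hrun : T.IsRun T.jeffersonCrit T.trivElig V) (h : ℕ)
    (p c : Fin (T.n + 1)) (hc : c ∈ T.children p) :
    ((V h p : ℝ) + 1) / T.R p ≤ ((V h c : ℝ) + 1) / T.R c :=
  (hrun.isJeffersonBalanced h).jeffersonCrit_parent_le (hrun.isAlloc h) hc
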